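/- For every γ ∈ (0, 1 − 2π⁻²] one has m_γ = 1. -/

import Mathlib

open MeasureTheory Set Real

noncomputable section

/-- Pairs `(y, y')` representing a function of Sobolev class `W¹₂[0,1]`:
`y` is absolutely continuous on `[0,1]` (being an integral of `y'`)
with derivative `y'` belonging to `L²[0,1]`. -/
def W12 : Set ((ℝ → ℝ) × (ℝ → ℝ)) :=
  {p | (∀ x ∈ Icc (0:ℝ) 1, p.1 x = p.1 0 + ∫ t in (0:ℝ)..x, p.2 t) ∧
    IntervalIntegrable p.2 volume 0 1 ∧
    IntervalIntegrable (fun t => (p.2 t) ^ 2) volume 0 1}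

/-- The Rayleigh quotient `(∫₀¹ ((y')² + q y²) dx) / (∫₀¹ y² dx)`. -/
def Rayleigh (q : ℝ → ℝ) (p : (ℝ → ℝ) × (ℝ → ℝ)) : ℝ :=
  (∫ t in (0:ℝ)..1, ((p.2 t) ^ 2 + q t * (p.1 t) ^ 2)) /
    ∫ t in (0:ℝ)..1, (p.1 t) ^ 2

/-- The smallest eigenvalue `λ₁(q)` of the Neumann problem `-y'' + q y = λ y`,
`y'(0) = y'(1) = 0`, defined as the infimum of Rayleigh quotients over
nonzero `y ∈ W¹₂[0,1]`. -/
def lambda1 (q : ℝ → ℝ) : ℝ :=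
  sInf {r | ∃ p ∈ W12, 0 < (∫ t in (0:ℝ)..1, (p.1 t) ^ 2) ∧ r = Rayleigh q p}

/-- The class `A_γ` of potentials: `q ∈ L¹[0,1]`, `q ≥ 0` a.e. on `[0,1]`,
`∫₀¹ q^γ dx = 1`. -/
def Agamma (γ : ℝ) : Set (ℝ → ℝ) :=
  {q | IntervalIntegrable q volume 0 1 ∧
    (∀ᵐ t ∂(volume.restrict (Icc (0:ℝ) 1)), 0 ≤ q t) ∧
    (∫ t in (0:ℝ)..1, q t ^ γ) = 1}

/-- `m_γ := inf_{q ∈ A_γ} λ₁(q)`. -/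
def mGamma (γ : ℝ) : ℝ := sInf (lambda1 '' Agamma γ)

/-- The set `M` of uniformly positive functions of class `W¹₂[0,1]`. -/
def Mset : Set ((ℝ → ℝ) × (ℝ → ℝ)) :=
  {p ∈ W12 | ∃ ζ > (0:ℝ), ∀ x ∈ Icc (0:ℝ) 1, ζ ≤ p.1 x}

/-- `J_γ(y) := ∫₀¹ (y')² dx + (∫₀¹ y^{2γ/(γ−1)} dx)^{(γ−1)/γ}`. -/
def Jg (γ : ℝ) (p : (ℝ → ℝ) × (ℝ → ℝ)) : ℝ :=
  (∫ t in (0:ℝ)..1, (p.2 t) ^ 2) +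
    (∫ t in (0:ℝ)..1, (p.1 t) ^ (2 * γ / (γ - 1))) ^ ((γ - 1) / γ)

/-- `G_γ(y) := J_γ(y) / ∫₀¹ y² dx`. -/
def Gg (γ : ℝ) (p : (ℝ → ℝ) × (ℝ → ℝ)) : ℝ :=
  Jg γ p / ∫ t in (0:ℝ)..1, (p.1 t) ^ 2


/-- The potential `y² + (2/p) y^{-p}`, shifted so that its minimum, attained at `1`, is `0`. -/
def potential (p y : ℝ) : ℝ := y ^ 2 + 2 / p * y ^ (-p) - (1 + 2 / p)

lemma potential_nonneg {p y : ℝ} (hp : 0 < p) (hy : 0 < y) : 0 ≤ potential p y := by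
  have h := Real.geom_mean_le_arith_mean2_weighted (w₁ := p / (p + 2)) (w₂ := 2 / (p + 2))
    (p₁ := y ^ (2 : ℝ)) (p₂ := y ^ (-p)) (by positivity) (by positivity) (by positivity)
    (by positivity) (by field_simp)
  rw [← Real.rpow_mul hy.le, ← Real.rpow_mul hy.le, ← Real.rpow_add hy,
    show 2 * (p / (p + 2)) + -p * (2 / (p + 2)) = 0 by ring, Real.rpow_zero, Real.rpow_two] at h
  have h2 : potential p y
      = (p + 2) / p * (p / (p + 2) * y ^ 2 + 2 / (p + 2) * y ^ (-p) - 1) := by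
    unfold potential; field_simp
  rw [h2]
  exact mul_nonneg (by positivity) (by linarith)

lemma strictConvexOn_potential {p : ℝ} (hp : 0 < p) :
    StrictConvexOn ℝ (Ioi 0) (potential p) := by
  have h1 : StrictConvexOn ℝ (Ioi (0 : ℝ)) (fun y : ℝ => y ^ 2) :=
    (Even.strictConvexOn_pow (n := 2) (by decide) (by norm_num)).subset (subset_univ _)
      (convex_Ioi 0)
  have h2 : ConvexOn ℝ (Ioi (0 : ℝ)) (fun y : ℝ => 2 / p * y ^ (-p)) := by
    refine convexOn_of_hasDerivWithinAt2_nonneg (convex_Ioi 0)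
      (f' := fun y => 2 / p * (-p * y ^ (-p - 1)))
      (f'' := fun y => 2 / p * (-p * ((-p - 1) * y ^ (-p - 1 - 1)))) ?_ ?_ ?_ ?_
    · intro y hy
      have hy' : y ≠ 0 := (mem_Ioi.1 hy).ne'
      exact ((Real.continuousAt_rpow_const y (-p) (Or.inl hy')).const_mul _).continuousWithinAt
    · intro y hy
      rw [interior_Ioi] at *
      exact ((Real.hasDerivAt_rpow_const (Or.inl (mem_Ioi.1 hy).ne')).const_mul
        (2 / p)).hasDerivWithinAt
    · intro y hy
      rw [interior_Ioi] at *
      exact (((Real.hasDerivAt_rpow_const (Or.inl (mem_Ioi.1 hy).ne')).const_mul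
        (-p)).const_mul (2 / p)).hasDerivWithinAt
    · intro y hy
      rw [interior_Ioi] at hy
      have hy' : 0 < y := hy
      rw [show 2 / p * (-p * ((-p - 1) * y ^ (-p - 1 - 1)))
        = 2 * (p + 1) * y ^ (-p - 1 - 1) by field_simp; ring]
      positivity
  have h3 := (h1.add_convexOn h2).add_const (-(1 + 2 / p))
  refine h3.congr ?_
  intro y _
  simp [potential, sub_eq_add_neg]

lemma rpow_second_deriv_bound {N y : ℝ} (hN : 1 ≤ N) (hy : 0 < y) (hθ : 0 < 1 + N * (y - 1)) :
    4 * N * y ^ (-(3 * N) - 1) ≤ (N - 1) + (3 * N + 1) * ((1 + N * (y - 1)) ^ 4)⁻¹ := by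
  have hN0 : 0 < N := by linarith
  set θ := 1 + N * (y - 1) with hθdef
  have hb : θ ≤ y ^ N := by
    have := one_add_mul_self_le_rpow_one_add (s := y - 1) (by linarith) hN
    simpa [hθdef] using this
  have h1 : y ^ (-(3 * N) - 1) ≤ θ ^ (-(3 + 1 / N)) := by
    rw [show -(3 * N) - 1 = N * (-(3 + 1 / N)) by field_simp; ring, Real.rpow_mul hy.le]
    exact Real.rpow_le_rpow_of_nonpos hθ hb (by have : 0 < 1 / N := by positivity
                                                linarith)
  have h2 := Real.geom_mean_le_arith_mean2_weighted (w₁ := (N - 1) / (4 * N))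
    (w₂ := (3 * N + 1) / (4 * N)) (p₁ := 1) (p₂ := θ ^ (-4 : ℝ))
    (div_nonneg (by linarith) (by positivity)) (by positivity) (by positivity)
    (by positivity) (by field_simp; ring)
  rw [Real.one_rpow, one_mul, ← Real.rpow_mul hθ.le,
    show -4 * ((3 * N + 1) / (4 * N)) = -(3 + 1 / N) by field_simp] at h2
  have h3 : θ ^ (-4 : ℝ) = (θ ^ 4)⁻¹ := by
    rw [Real.rpow_neg hθ.le]; norm_cast
  rw [h3] at h2
  calc 4 * N * y ^ (-(3 * N) - 1)
      ≤ 4 * N * ((N - 1) / (4 * N) * 1 + (3 * N + 1) / (4 * N) * (θ ^ 4)⁻¹) := by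
        gcongr; exact h1.trans h2
    _ = _ := by field_simp

lemma potential_le_isochronous {N y : ℝ} (hN : 1 ≤ N) (hθ : 0 < 1 + N * (y - 1)) :
    potential (3 * N - 1) y ≤
      (3 * N + 1) / (4 * N ^ 2) * (1 + N * (y - 1) - (1 + N * (y - 1))⁻¹) ^ 2 := by
  have hN0 : 0 < N := by linarith
  have hp : 0 < 3 * N - 1 := by linarith
  have hmem : ∀ z : ℝ, z ∈ Ioi (1 - 1 / N) → 0 < z ∧ 0 < 1 + N * (z - 1) := by
    intro z hz
    have hz' : 1 - 1 / N < z := hz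
    have h1 : 1 / N ≤ 1 := by rw [div_le_one hN0]; exact hN
    refine ⟨by linarith, ?_⟩
    have := mul_lt_mul_of_pos_left hz' hN0
    rw [mul_sub, mul_one, mul_one_div_cancel hN0.ne'] at this
    linarith
  have hy : y ∈ Ioi (1 - 1 / N) := by
    rw [mem_Ioi, sub_lt_iff_lt_add, ← sub_lt_iff_lt_add', lt_div_iff₀ hN0]
    linarith
  let f : ℝ → ℝ := fun z => (3 * N + 1) / (4 * N ^ 2) * (1 + N * (z - 1) - (1 + N * (z - 1))⁻¹) ^ 2
    - potential (3 * N - 1) z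
  let f' : ℝ → ℝ := fun z => (3 * N + 1) / (2 * N) * (1 + N * (z - 1) - ((1 + N * (z - 1)) ^ 3)⁻¹)
    - (2 * z - 2 * z ^ (-(3 * N)))
  let f'' : ℝ → ℝ := fun z => (3 * N + 1) / 2 * (1 + 3 * ((1 + N * (z - 1)) ^ 4)⁻¹)
    - (2 + 6 * N * z ^ (-(3 * N) - 1))
  have hd0 : ∀ z : ℝ, HasDerivAt (fun z => 1 + N * (z - 1)) N z := by
    intro z
    simpa using (((hasDerivAt_id z).sub_const 1).const_mul N).const_add 1
  have hd1 : ∀ z ∈ Ioi (1 - 1 / N), HasDerivAt f (f' z) z := by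
    intro z hz
    obtain ⟨hz0, hz1⟩ := hmem z hz
    have e1 := (((hd0 z).sub ((hd0 z).inv hz1.ne')).pow 2).const_mul ((3 * N + 1) / (4 * N ^ 2))
    have e2 := (((hasDerivAt_id z).pow 2).add ((Real.hasDerivAt_rpow_const (p := -(3 * N - 1))
      (Or.inl hz0.ne')).const_mul (2 / (3 * N - 1)))).sub_const (1 + 2 / (3 * N - 1))
    refine (e1.sub e2).congr_deriv ?_
    simp only [f', id, Pi.sub_apply, Pi.inv_apply]
    rw [show -(3 * N - 1) - 1 = -(3 * N) by ring]
    generalize z ^ (-(3 * N)) = w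
    generalize 1 + N * (z - 1) = θ at hz1 ⊢
    have hp' := hp.ne'
    push_cast
    field_simp
    ring
  have hd2 : ∀ z ∈ Ioi (1 - 1 / N), HasDerivAt f' (f'' z) z := by
    intro z hz
    obtain ⟨hz0, hz1⟩ := hmem z hz
    have e1 := ((hd0 z).sub (((hd0 z).pow 3).inv (pow_ne_zero 3 hz1.ne'))).const_mul
      ((3 * N + 1) / (2 * N))
    have e2 := ((hasDerivAt_id z).const_mul 2).sub ((Real.hasDerivAt_rpow_const (p := -(3 * N))
      (Or.inl hz0.ne')).const_mul 2)
    refine (e1.sub e2).congr_deriv ?_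
    simp only [f'', Pi.pow_apply]
    generalize z ^ (-(3 * N) - 1) = w
    generalize 1 + N * (z - 1) = θ at hz1 ⊢
    push_cast
    field_simp
    ring
  have hconv : ConvexOn ℝ (Ioi (1 - 1 / N)) f := by
    refine convexOn_of_hasDerivWithinAt2_nonneg (f' := f') (f'' := f'') (convex_Ioi _)
      (fun z hz => (hd1 z hz).continuousAt.continuousWithinAt) ?_ ?_ ?_ <;>
      rw [interior_Ioi]
    · exact fun z hz => (hd1 z hz).hasDerivWithinAt
    · exact fun z hz => (hd2 z hz).hasDerivWithinAt
    · intro z hz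
      obtain ⟨hz0, hz1⟩ := hmem z hz
      have := rpow_second_deriv_bound hN hz0 hz1
      simp only [f'']
      linarith
  have h_one : (1 : ℝ) ∈ Ioi (1 - 1 / N) := by
    rw [mem_Ioi]; have : 0 < 1 / N := by positivity
    linarith
  have hder1 : f' 1 = 0 := by simp [f']
  have hmin : IsMinOn f (Ioi (1 - 1 / N)) 1 := by
    refine hconv.isMinOn_of_rightDeriv_eq_zero (by rwa [interior_Ioi]) ?_
    rw [← hder1]
    exact (hd1 1 h_one).hasDerivWithinAt.derivWithin (uniqueDiffWithinAt_Ioi 1)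
  have h0 : f 1 = 0 := by simp [f, potential]
  have := hmin hy
  simpa [h0, f] using this

lemma abs_integral_le_integral_abs_unitInterval {g : ℝ → ℝ}
    (hg : IntervalIntegrable g volume 0 1) {u v : ℝ} (hu : u ∈ Icc (0 : ℝ) 1)
    (hv : v ∈ Icc (0 : ℝ) 1) : |∫ x in u..v, g x| ≤ ∫ x in (0 : ℝ)..1, |g x| := by
  rw [intervalIntegral.integral_of_le zero_le_one]
  have h : ‖∫ x in u..v, g x‖ ≤ ∫ x in uIoc u v, ‖g x‖ :=
    intervalIntegral.norm_integral_le_integral_norm_uIoc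
  refine h.trans (setIntegral_mono_set ?_ (Filter.Eventually.of_forall fun x => norm_nonneg _) ?_)
  · exact ((intervalIntegrable_iff_integrableOn_Ioc_of_le zero_le_one).1 hg).norm
  · exact LE.le.eventuallyLE (Ioc_subset_Ioc (le_min hu.1 hv.1) (max_le hu.2 hv.2))

lemma W12.continuousOn {p : (ℝ → ℝ) × (ℝ → ℝ)} (hp : p ∈ W12) :
    ContinuousOn p.1 (Icc 0 1) := by
  have h := hp.2.1.absolutelyContinuousOnInterval_intervalIntegral (c := 0) (by simp)
  have h2 := h.continuousOn
  rw [uIcc_of_le zero_le_one] at h2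
  exact (continuousOn_const.add h2).congr hp.1

/-- The chain rule in integrated form for functions of class `W¹₂[0,1]`. -/
lemma W12.integral_comp_mul {p : (ℝ → ℝ) × (ℝ → ℝ)} (hp : p ∈ W12) {f : ℝ → ℝ}
    (hf : Continuous f) {M : ℝ} (hM : ∀ x, |f x| ≤ M) {u v : ℝ} (hu : u ∈ Icc (0 : ℝ) 1)
    (hv : v ∈ Icc (0 : ℝ) 1) :
    ∫ x in u..v, f (p.1 x) * p.2 x = ∫ t in p.1 u..p.1 v, f t := by
  obtain ⟨hp1, hp2, -⟩ := hp
  set Y : ℝ → ℝ := fun x => p.1 0 + ∫ t in (0 : ℝ)..x, p.2 t with hY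
  set F : ℝ → ℝ := fun z => ∫ t in (0 : ℝ)..z, f t with hF
  have hsub : uIcc u v ⊆ uIcc 0 1 := by
    rw [uIcc_of_le zero_le_one]
    exact ordConnected_Icc.uIcc_subset hu hv
  have hac := (hp2.absolutelyContinuousOnInterval_intervalIntegral (c := 0) (by simp)).mono hsub
  have hFd : ∀ a b, dist (F a) (F b) ≤ M * dist a b := by
    intro a b
    have hint : ∀ a b, IntervalIntegrable f volume a b := fun a b => hf.intervalIntegrable a b
    rw [dist_comm, Real.dist_eq, dist_comm, Real.dist_eq, hF]
    simp only
    rw [intervalIntegral.integral_interval_sub_left (hint _ _) (hint _ _)]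
    exact intervalIntegral.norm_integral_le_of_norm_le_const (f := f)
      fun x _ => hM x
  have hacG : AbsolutelyContinuousOnInterval (fun x => F (Y x)) u v := by
    unfold AbsolutelyContinuousOnInterval at hac ⊢
    have h0 := hac.const_mul M
    rw [mul_zero] at h0
    refine squeeze_zero (fun _ => Finset.sum_nonneg fun _ _ => dist_nonneg) (fun E => ?_) h0
    rw [Finset.mul_sum]
    refine Finset.sum_le_sum fun i _ => (hFd _ _).trans_eq ?_
    simp [hY]
  have hder : ∀ᵐ x, x ∈ uIcc u v → HasDerivAt (fun x => F (Y x)) (f (Y x) * p.2 x) x := by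
    filter_upwards [hp2.ae_hasDerivAt_integral] with x hx hxu
    have h1 := (hx (hsub hxu) 0 (by simp)).const_add (p.1 0)
    have h2 : HasDerivAt F (f (Y x)) (Y x) :=
      intervalIntegral.integral_hasDerivAt_right (hf.intervalIntegrable _ _)
        (hf.stronglyMeasurableAtFilter _ _) hf.continuousAt
    exact h2.comp x h1
  have hYp : ∀ x ∈ Icc (0 : ℝ) 1, Y x = p.1 x := fun x hx => (hp1 x hx).symm
  calc ∫ x in u..v, f (p.1 x) * p.2 x = ∫ x in u..v, deriv (fun x => F (Y x)) x := by
        refine intervalIntegral.integral_congr_ae ?_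
        filter_upwards [hder] with x hx hxu
        have hxu' := uIoc_subset_uIcc hxu
        rw [(hx hxu').deriv, hYp x (by simpa using hsub hxu')]
    _ = F (p.1 v) - F (p.1 u) := by
        rw [hacG.integral_deriv_eq_sub, hYp u hu, hYp v hv]
    _ = _ := intervalIntegral.integral_interval_sub_left (hf.intervalIntegrable _ _)
        (hf.intervalIntegrable _ _)

lemma integral_sqrt_one_sub_sq_mul_one_add_odd {g : ℝ → ℝ} (hg : Continuous g)
    (hodd : ∀ t, g (-t) = -g t) :
    ∫ t in (-1 : ℝ)..1, √(1 - t ^ 2) * (1 + g t) = π / 2 := by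
  have hs : Continuous fun t : ℝ => √(1 - t ^ 2) := by fun_prop
  have h0 : ∫ t in (-1 : ℝ)..1, √(1 - t ^ 2) * g t = 0 := by
    have h := intervalIntegral.integral_comp_neg (a := -1) (b := 1)
      (fun t : ℝ => √(1 - t ^ 2) * g t)
    simp only [hodd, neg_sq, mul_neg, intervalIntegral.integral_neg, neg_neg] at h
    linarith
  have hi : IntervalIntegrable (fun t : ℝ => √(1 - t ^ 2) * g t) volume (-1) 1 :=
    (hs.mul hg).intervalIntegrable _ _
  simp only [mul_add, mul_one]
  rw [intervalIntegral.integral_add (hs.intervalIntegrable _ _) hi, integral_sqrt_one_sub_sq, h0,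
    add_zero]

/-- An explicit square-root profile of the isochronous potential `c² (θ - θ⁻¹)²`, where
`θ = 1 + N (y - 1)`, at energy `r²`, together with its turning points and its action. -/
lemma exists_isochronous_profile {N c r : ℝ} (hN : 0 < N) (hc : 0 < c) (hr : 0 ≤ r) :
    ∃ (f : ℝ → ℝ) (y₁ y₂ : ℝ), Continuous f ∧ (∀ y, 0 ≤ f y) ∧ (∀ y, f y ≤ r) ∧
      (∀ y, 0 < f y → 0 < 1 + N * (y - 1) ∧
        f y ^ 2 ≤ r ^ 2 - c ^ 2 * (1 + N * (y - 1) - (1 + N * (y - 1))⁻¹) ^ 2) ∧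
      (0 < 1 + N * (y₁ - 1) ∧
        c ^ 2 * (1 + N * (y₁ - 1) - (1 + N * (y₁ - 1))⁻¹) ^ 2 = r ^ 2) ∧
      (0 < 1 + N * (y₂ - 1) ∧
        c ^ 2 * (1 + N * (y₂ - 1) - (1 + N * (y₂ - 1))⁻¹) ^ 2 = r ^ 2) ∧
      y₁ ≤ y₂ ∧ ∫ y in y₁..y₂, f y = π * r ^ 2 / (4 * c * N) := by
  let Q : ℝ → ℝ := fun s => √(s ^ 2 + 4 * c ^ 2)
  let Θ : ℝ → ℝ := fun s => (s + Q s) / (2 * c)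
  let Y : ℝ → ℝ := fun s => 1 + (Θ s - 1) / N
  have hQarg : ∀ s : ℝ, 0 < s ^ 2 + 4 * c ^ 2 := fun s => by positivity
  have hQpos : ∀ s, 0 < Q s := fun s => Real.sqrt_pos.2 (hQarg s)
  have hQsq : ∀ s, Q s ^ 2 = s ^ 2 + 4 * c ^ 2 := fun s => Real.sq_sqrt (hQarg s).le
  have hsQ : ∀ s, |s| < Q s := fun s =>
    abs_lt_of_sq_lt_sq (by rw [hQsq]; nlinarith [pow_pos hc 2]) (hQpos s).le
  have hQadd : ∀ s, 0 < s + Q s := fun s => by linarith [neg_abs_le s, hsQ s]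
  have hΘpos : ∀ s, 0 < Θ s := fun s => div_pos (hQadd s) (by positivity)
  have hΘinv : ∀ s, Θ s - (Θ s)⁻¹ = s / c := by
    intro s
    have h1 := (hQadd s).ne'
    simp only [Θ]
    rw [inv_div, div_sub_div _ _ (by positivity) h1, div_eq_div_iff (by positivity) hc.ne']
    linear_combination c * hQsq s
  have hΘmono : Monotone Θ := by
    intro s t hst
    refine div_le_div_of_nonneg_right ?_ (by positivity)
    by_contra! hlt
    have h1 : Q s - s < Q t - t := by
      by_contra! h2
      nlinarith [hQsq s, hQsq t, hQadd s, hQadd t, abs_lt.1 (hsQ t), abs_lt.1 (hsQ s)]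
    linarith
  have hNY : ∀ s, 1 + N * (Y s - 1) = Θ s := by
    intro s; simp only [Y]; field_simp; ring
  let H : ℝ → ℝ := fun y => max (1 + N * (y - 1)) (Θ (-r))
  have hHpos : ∀ y, 0 < H y := fun y => lt_max_of_lt_right (hΘpos _)
  have hHc : Continuous H := by fun_prop
  let f : ℝ → ℝ := fun y => √(r ^ 2 - c ^ 2 * (H y - (H y)⁻¹) ^ 2)
  have hfc : Continuous f := by
    have hinv : Continuous fun y => (H y)⁻¹ := hHc.inv₀ fun y => (hHpos y).ne'
    exact (continuous_const.sub (((hHc.sub hinv).pow 2).const_mul _)).sqrt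
  have hend : ∀ s, s ^ 2 = r ^ 2 → 0 < 1 + N * (Y s - 1) ∧
      c ^ 2 * (1 + N * (Y s - 1) - (1 + N * (Y s - 1))⁻¹) ^ 2 = r ^ 2 := by
    intro s hs
    rw [hNY, hΘinv]
    exact ⟨hΘpos s, by rw [← hs]; field_simp⟩
  have hfY : ∀ t ∈ Icc (-1 : ℝ) 1, f (Y (r * t)) = r * √(1 - t ^ 2) := by
    intro t ht
    have h1 : H (Y (r * t)) = Θ (r * t) := by
      simp only [H]
      rw [hNY]
      exact max_eq_left (hΘmono (by nlinarith [ht.1]))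
    simp only [f]
    rw [h1, hΘinv, show r ^ 2 - c ^ 2 * (r * t / c) ^ 2 = r ^ 2 * (1 - t ^ 2) by field_simp,
      Real.sqrt_mul (sq_nonneg r), Real.sqrt_sq hr]
  have hQd : ∀ s, HasDerivAt Q (s / Q s) s := by
    intro s
    refine ((((hasDerivAt_id s).pow 2).add_const (4 * c ^ 2)).sqrt (hQarg s).ne').congr_deriv ?_
    simp only [Q, id, Pi.pow_apply]
    field_simp
    simp
  have hYd : ∀ t, HasDerivAt (fun t => Y (r * t))
      (r / (2 * c * N) * (1 + r * t / Q (r * t))) t := by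
    intro t
    have h1 : HasDerivAt (fun t : ℝ => r * t) r t := by
      simpa using (hasDerivAt_id t).const_mul r
    have h2 : HasDerivAt Y ((1 + (r * t) / Q (r * t)) / (2 * c) / N) (r * t) :=
      (((((hasDerivAt_id _).add (hQd _)).div_const (2 * c)).sub_const 1).div_const N).const_add 1
    refine (h2.comp t h1).congr_deriv ?_
    field_simp
  have hQc : Continuous Q := by fun_prop
  have hgc : Continuous fun t => r * t / Q (r * t) :=
    (by fun_prop : Continuous fun t : ℝ => r * t).div (hQc.comp (by fun_prop))
      fun t => (hQpos _).ne'
  refine ⟨f, Y (r * (-1)), Y (r * 1), hfc, fun y => Real.sqrt_nonneg _, fun y => ?_, fun y hy => ?_,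
    hend _ (by ring), hend _ (by ring), ?_, ?_⟩
  · refine Real.sqrt_le_iff.2 ⟨hr, ?_⟩
    nlinarith [mul_nonneg (sq_nonneg c) (sq_nonneg (H y - (H y)⁻¹))]
  · have hlt : Θ (-r) < 1 + N * (y - 1) := by
      by_contra! hle
      have h1 : H y = Θ (-r) := max_eq_right hle
      have h2 : f y = 0 := by
        simp only [f]
        rw [h1, hΘinv, show r ^ 2 - c ^ 2 * (-r / c) ^ 2 = 0 by field_simp; ring, Real.sqrt_zero]
      exact hy.ne' h2
    have h1 : H y = 1 + N * (y - 1) := max_eq_left hlt.le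
    refine ⟨(hΘpos _).trans hlt, ?_⟩
    rw [← h1]
    exact (Real.sq_sqrt (Real.sqrt_pos.1 hy).le).le
  · have : Θ (r * (-1)) ≤ Θ (r * 1) := hΘmono (by linarith)
    simp only [Y]
    gcongr
  · rw [← intervalIntegral.integral_comp_mul_deriv (a := -1) (b := 1)
      (f := fun t => Y (r * t)) (fun t _ => hYd t)
      ((hgc.const_add 1).const_mul _).continuousOn hfc]
    calc _ = ∫ t in (-1 : ℝ)..1, r ^ 2 / (2 * c * N) *
          (√(1 - t ^ 2) * (1 + r * t / Q (r * t))) := by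
          refine intervalIntegral.integral_congr fun t ht => ?_
          rw [uIcc_of_le (by norm_num)] at ht
          simp only [Function.comp]
          rw [hfY t ht]
          ring
      _ = _ := by
          rw [intervalIntegral.integral_const_mul, integral_sqrt_one_sub_sq_mul_one_add_odd hgc]
          · field_simp
            ring
          · intro t
            have : Q (r * -t) = Q (r * t) := by simp [Q]
            rw [this]; ring

lemma W12.const_mul {p : (ℝ → ℝ) × (ℝ → ℝ)} (hp : p ∈ W12) (t : ℝ) :
    ((fun x => t * p.1 x, fun x => t * p.2 x) : (ℝ → ℝ) × (ℝ → ℝ)) ∈ W12 := by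
  obtain ⟨h1, h2, h3⟩ := hp
  refine ⟨fun x hx => ?_, h2.const_mul t, ?_⟩
  · simp only [intervalIntegral.integral_const_mul]
    rw [h1 x hx]; ring
  · simp only [mul_pow]
    exact h3.const_mul _

lemma continuousOn_potential {p : ℝ} : ContinuousOn (potential p) (Ioi 0) := by
  intro y hy
  have hy' : y ≠ 0 := (mem_Ioi.1 hy).ne'
  have := Real.continuousAt_rpow_const y (-p) (Or.inl hy')
  unfold potential
  exact (((continuousAt_id.pow 2).add (this.const_mul _)).sub
    continuousAt_const).continuousWithinAt

lemma continuousOn_potential_comp {y : ℝ → ℝ} {s : Set ℝ} (hy : ContinuousOn y s)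
    (hpos : ∀ x ∈ s, 0 < y x) (p : ℝ) : ContinuousOn (fun x => potential p (y x)) s :=
  continuousOn_potential.comp hy hpos

/-- If the extreme values of `y` lie at the same energy, the energy inequality holds. -/
lemma integral_potential_le_of_extrema {p : (ℝ → ℝ) × (ℝ → ℝ)} (hp : p ∈ W12)
    (hpos : ∀ x ∈ Icc (0 : ℝ) 1, 0 < p.1 x) {u v : ℝ} (hu : u ∈ Icc (0 : ℝ) 1)
    (hv : v ∈ Icc (0 : ℝ) 1) (hmin : ∀ x ∈ Icc (0 : ℝ) 1, p.1 u ≤ p.1 x)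
    (hmax : ∀ x ∈ Icc (0 : ℝ) 1, p.1 x ≤ p.1 v) (hlt : p.1 u < p.1 v)
    (heq : potential (π ^ 2 - 2) (p.1 u) = potential (π ^ 2 - 2) (p.1 v)) :
    ∫ x in (0 : ℝ)..1, potential (π ^ 2 - 2) (p.1 x) ≤ ∫ x in (0 : ℝ)..1, p.2 x ^ 2 := by
  have hπ := Real.pi_gt_three
  set P := π ^ 2 - 2 with hP
  set N := (π ^ 2 - 1) / 3 with hN
  have hPN : P = 3 * N - 1 := by rw [hP, hN]; ring
  have hP0 : 0 < P := by rw [hP]; nlinarith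
  have hN1 : 1 ≤ N := by rw [hN]; nlinarith
  have hN0 : 0 < N := by linarith
  set e := potential P (p.1 u) with he
  have he0 : 0 ≤ e := potential_nonneg hP0 (hpos u hu)
  obtain ⟨f, y₁, y₂, hfc, hf0, hfr, hf, ⟨h1, h1'⟩, ⟨h2, h2'⟩, h12, hint⟩ :=
    exists_isochronous_profile (N := N) (c := π / (2 * N)) hN0 (by positivity) (Real.sqrt_nonneg e)
  have hcoef : (3 * N + 1) / (4 * N ^ 2) = (π / (2 * N)) ^ 2 := by
    rw [show 3 * N + 1 = π ^ 2 by rw [hN]; ring, div_pow π (2 * N), mul_pow 2 N]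
    norm_num
  have hpot : ∀ y, 0 < 1 + N * (y - 1) → potential P y ≤
      (π / (2 * N)) ^ 2 * (1 + N * (y - 1) - (1 + N * (y - 1))⁻¹) ^ 2 := by
    intro y hy
    rw [hPN, ← hcoef]
    exact potential_le_isochronous hN1 hy
  rw [Real.sq_sqrt he0] at h1' h2' hint
  have hint' : ∫ y in y₁..y₂, f y = e / 2 := by rw [hint]; field_simp; ring
  have hypos : ∀ y, 0 < 1 + N * (y - 1) → 0 < y := by
    intro y hy
    by_contra! h
    nlinarith
  have hsc := strictConvexOn_potential hP0
  have hua : p.1 u ≤ y₁ := by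
    by_contra! h
    have h3 := hsc.lt_on_openSegment (hypos y₁ h1) (hpos v hv) (h.trans hlt).ne
      (by rw [openSegment_eq_Ioo (h.trans hlt)]; exact ⟨h, hlt⟩)
    exact absurd h3 (not_lt.2 (max_le ((hpot y₁ h1).trans h1'.le) heq.ge))
  have hvb : y₂ ≤ p.1 v := by
    by_contra! h
    have h3 := hsc.lt_on_openSegment (hpos u hu) (hypos y₂ h2) (hlt.trans h).ne
      (by rw [openSegment_eq_Ioo (hlt.trans h)]; exact ⟨hlt, h⟩)
    rw [← heq] at h3
    exact absurd h3 (not_lt.2 (max_le le_rfl ((hpot y₂ h2).trans h2'.le)))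
  have hle : ∀ x ∈ Icc (0 : ℝ) 1, potential P (p.1 x) ≤ e := by
    intro x hx
    have h3 := hsc.convexOn.le_on_segment (hpos u hu) (hpos v hv)
      (by rw [segment_eq_Icc hlt.le]; exact ⟨hmin x hx, hmax x hx⟩)
    rwa [← heq, max_self] at h3
  have hfpot : ∀ x ∈ Icc (0 : ℝ) 1, f (p.1 x) ^ 2 ≤ e - potential P (p.1 x) := by
    intro x hx
    rcases (hf0 (p.1 x)).eq_or_lt with h | h
    · rw [← h]; linarith [hle x hx]
    · obtain ⟨h3, h4⟩ := hf _ h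
      rw [Real.sq_sqrt he0] at h4
      linarith [hpot _ h3]
  have hycont := W12.continuousOn hp
  have hicc : uIcc (0 : ℝ) 1 = Icc 0 1 := uIcc_of_le zero_le_one
  have hI : IntervalIntegrable (fun x => f (p.1 x) * p.2 x) volume 0 1 :=
    hp.2.1.continuousOn_mul (by rw [hicc]; exact hfc.comp_continuousOn hycont)
  have hIpot : IntervalIntegrable (fun x => potential P (p.1 x)) volume 0 1 :=
    ContinuousOn.intervalIntegrable
      (by rw [hicc]; exact continuousOn_potential_comp hycont hpos P)
  have key : e / 2 ≤ ∫ x in (0 : ℝ)..1, |f (p.1 x) * p.2 x| := by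
    calc e / 2 = ∫ y in y₁..y₂, f y := hint'.symm
      _ ≤ ∫ y in p.1 u..p.1 v, f y :=
        intervalIntegral.integral_mono_interval hua h12 hvb
          (Filter.Eventually.of_forall hf0) (hfc.intervalIntegrable _ _)
      _ = ∫ x in u..v, f (p.1 x) * p.2 x :=
        (W12.integral_comp_mul hp hfc (fun y => by rw [abs_of_nonneg (hf0 y)]; exact hfr y)
          hu hv).symm
      _ ≤ _ := (le_abs_self _).trans (abs_integral_le_integral_abs_unitInterval hI hu hv)
  have hmono : ∫ x in (0 : ℝ)..1, 2 * |f (p.1 x) * p.2 x| ≤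
      ∫ x in (0 : ℝ)..1, (p.2 x ^ 2 + (e - potential P (p.1 x))) := by
    refine intervalIntegral.integral_mono_on zero_le_one (hI.abs.const_mul 2)
      (hp.2.2.add (intervalIntegrable_const.sub hIpot)) fun x hx => ?_
    rw [abs_mul, abs_of_nonneg (hf0 _)]
    nlinarith [hfpot x hx, sq_nonneg (f (p.1 x) - |p.2 x|), sq_abs (p.2 x)]
  rw [intervalIntegral.integral_add hp.2.2 (intervalIntegrable_const.sub hIpot),
    intervalIntegral.integral_sub intervalIntegrable_const hIpot,
    intervalIntegral.integral_const_mul, intervalIntegral.integral_const] at hmono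
  simp only [sub_zero, one_smul] at hmono
  linarith

/-- Equalising the energies of two positive numbers by a common dilation. -/
lemma exists_pos_potential_mul_eq {P a b : ℝ} (hP : 0 < P) (ha : 0 < a) (hab : a < b) :
    ∃ t > 0, potential P (t * a) = potential P (t * b) := by
  have hb : 0 < b := ha.trans hab
  have h1 : 0 < a ^ (-P) - b ^ (-P) :=
    sub_pos.2 (Real.rpow_lt_rpow_of_neg ha hab (by linarith))
  have h2 : 0 < b ^ 2 - a ^ 2 := by nlinarith
  set w := 2 / P * (a ^ (-P) - b ^ (-P)) / (b ^ 2 - a ^ 2) with hw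
  have hwpos : 0 < w := by positivity
  refine ⟨w ^ (1 / (P + 2)), by positivity, ?_⟩
  set t := w ^ (1 / (P + 2)) with ht
  have htpos : 0 < t := by positivity
  have ht1 : t ^ 2 = w * t ^ (-P) := by
    have h3 : t ^ (P + 2) = w := by
      rw [ht, ← Real.rpow_mul hwpos.le, one_div_mul_cancel (by positivity), Real.rpow_one]
    rw [← h3, ← Real.rpow_add htpos, ← Real.rpow_two]
    congr 1; ring
  have ht2 : w * (b ^ 2 - a ^ 2) = 2 / P * (a ^ (-P) - b ^ (-P)) := by
    rw [hw]; field_simp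
  unfold potential
  rw [Real.mul_rpow htpos.le ha.le, Real.mul_rpow htpos.le hb.le, mul_pow, mul_pow, ht1]
  linear_combination (-t ^ (-P)) * ht2

lemma exists_pos_integral_potential_le {p : (ℝ → ℝ) × (ℝ → ℝ)} (hp : p ∈ W12)
    (hpos : ∀ x ∈ Icc (0 : ℝ) 1, 0 < p.1 x) :
    ∃ t > 0, ∫ x in (0 : ℝ)..1, potential (π ^ 2 - 2) (t * p.1 x) ≤
      ∫ x in (0 : ℝ)..1, (t * p.2 x) ^ 2 := by
  have hπ := Real.pi_gt_three
  have hP0 : 0 < π ^ 2 - 2 := by nlinarith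
  have hne : (Icc (0 : ℝ) 1).Nonempty := nonempty_Icc.2 zero_le_one
  obtain ⟨u, hu, hmin⟩ := isCompact_Icc.exists_isMinOn hne (W12.continuousOn hp)
  obtain ⟨v, hv, hmax⟩ := isCompact_Icc.exists_isMaxOn hne (W12.continuousOn hp)
  have hmin' : ∀ x ∈ Icc (0 : ℝ) 1, p.1 u ≤ p.1 x := fun x hx => hmin hx
  have hmax' : ∀ x ∈ Icc (0 : ℝ) 1, p.1 x ≤ p.1 v := fun x hx => hmax hx
  rcases (hmin' v hv).eq_or_lt with heq | hlt
  · refine ⟨(p.1 u)⁻¹, inv_pos.2 (hpos u hu), ?_⟩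
    have h0 : ∫ x in (0 : ℝ)..1, potential (π ^ 2 - 2) ((p.1 u)⁻¹ * p.1 x) = 0 := by
      rw [intervalIntegral.integral_congr (g := fun _ => (0 : ℝ)), intervalIntegral.integral_zero]
      intro x hx
      rw [uIcc_of_le zero_le_one] at hx
      have hx1 : p.1 x = p.1 u := le_antisymm ((hmax' x hx).trans heq.ge) (hmin' x hx)
      simp [hx1, inv_mul_cancel₀ (hpos u hu).ne', potential]
    rw [h0]
    exact intervalIntegral.integral_nonneg zero_le_one fun x _ => sq_nonneg _
  · obtain ⟨t, ht, htab⟩ := exists_pos_potential_mul_eq hP0 (hpos u hu) hlt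
    exact ⟨t, ht, integral_potential_le_of_extrema (W12.const_mul hp t)
      (fun x hx => mul_pos ht (hpos x hx)) hu hv
      (fun x hx => mul_le_mul_of_nonneg_left (hmin' x hx) ht.le)
      (fun x hx => mul_le_mul_of_nonneg_left (hmax' x hx) ht.le)
      (mul_lt_mul_of_pos_left hlt ht) htab⟩

lemma rpow_le_one_add_mul_potential {P γ q z : ℝ} (hP : 0 < P) (hγ : 0 < γ)
    (hγP : γ ≤ P / (P + 2)) (hq : 0 ≤ q) (hz : 0 < z) :
    q ^ γ ≤ 1 + γ * (q * z ^ 2 - z ^ 2 + potential P z) := by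
  have hw : 0 ≤ 1 - γ - 2 * γ / P := by
    rw [le_div_iff₀ (by positivity)] at hγP
    rw [sub_nonneg, div_le_iff₀ hP]
    linarith
  have h := Real.geom_mean_le_arith_mean3_weighted (w₁ := γ) (w₂ := 2 * γ / P)
    (w₃ := 1 - γ - 2 * γ / P) (p₁ := q * z ^ (2 : ℝ)) (p₂ := z ^ (-P)) (p₃ := 1) hγ.le
    (by positivity) hw (by positivity) (by positivity) zero_le_one (by ring)
  rw [Real.mul_rpow hq (by positivity), ← Real.rpow_mul hz.le, ← Real.rpow_mul hz.le,
    Real.one_rpow, mul_one, mul_assoc, ← Real.rpow_add hz,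
    show 2 * γ + -P * (2 * γ / P) = 0 by field_simp; ring, Real.rpow_zero, mul_one,
    Real.rpow_two] at h
  refine h.trans_eq ?_
  unfold potential
  ring

lemma W12.integral_sq_le_of_eq_zero {p : (ℝ → ℝ) × (ℝ → ℝ)} (hp : p ∈ W12) {u : ℝ}
    (hu : u ∈ Icc (0 : ℝ) 1) (h0 : p.1 u = 0) :
    ∫ x in (0 : ℝ)..1, p.1 x ^ 2 ≤ ∫ x in (0 : ℝ)..1, p.2 x ^ 2 := by
  have hycont := W12.continuousOn hp
  obtain ⟨hp1, hp2, hp3⟩ := hp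
  set L := ∫ x in (0 : ℝ)..1, |p.2 x| with hL
  have hsubint : ∀ x ∈ Icc (0 : ℝ) 1, IntervalIntegrable p.2 volume 0 x := fun x hx =>
    hp2.mono_set (by rw [uIcc_of_le hx.1, uIcc_of_le zero_le_one]; exact Icc_subset_Icc_right hx.2)
  have hbound : ∀ x ∈ Icc (0 : ℝ) 1, |p.1 x| ≤ L := by
    intro x hx
    have h1 : p.1 x = ∫ t in u..x, p.2 t := by
      rw [← intervalIntegral.integral_interval_sub_left (hsubint x hx) (hsubint u hu)]
      linarith [hp1 x hx, hp1 u hu]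
    rw [h1]
    exact abs_integral_le_integral_abs_unitInterval hp2 hu hx
  have h1 : ∫ x in (0 : ℝ)..1, p.1 x ^ 2 ≤ L ^ 2 := by
    have : ∫ x in (0 : ℝ)..1, p.1 x ^ 2 ≤ ∫ _ in (0 : ℝ)..1, L ^ 2 := by
      refine intervalIntegral.integral_mono_on zero_le_one ?_ intervalIntegrable_const
        fun x hx => ?_
      · exact ContinuousOn.intervalIntegrable
          (by rw [uIcc_of_le zero_le_one]; exact hycont.pow 2)
      · rw [← sq_abs]
        exact pow_le_pow_left₀ (abs_nonneg _) (hbound x hx) 2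
    simpa using this
  have h2 : ∫ x in (0 : ℝ)..1, (2 * L * |p.2 x| - L ^ 2) ≤ ∫ x in (0 : ℝ)..1, p.2 x ^ 2 := by
    refine intervalIntegral.integral_mono_on zero_le_one
      ((hp2.abs.const_mul _).sub intervalIntegrable_const) hp3 fun x _ => ?_
    nlinarith [sq_nonneg (L - |p.2 x|), sq_abs (p.2 x)]
  rw [intervalIntegral.integral_sub (hp2.abs.const_mul _) intervalIntegrable_const,
    intervalIntegral.integral_const_mul, intervalIntegral.integral_const] at h2
  simp only [sub_zero, one_smul, ← hL] at h2
  nlinarith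

lemma Agamma.intervalIntegrable_mul_sq {γ : ℝ} {q : ℝ → ℝ} (hq : q ∈ Agamma γ)
    {p : (ℝ → ℝ) × (ℝ → ℝ)} (hp : p ∈ W12) :
    IntervalIntegrable (fun x => q x * p.1 x ^ 2) volume 0 1 :=
  hq.1.mul_continuousOn
    (by rw [uIcc_of_le zero_le_one]; exact (W12.continuousOn hp).pow 2)

lemma integral_sq_le_of_pos {γ : ℝ} (hγ : γ ∈ Ioc (0 : ℝ) (1 - 2 / π ^ 2)) {q : ℝ → ℝ}
    (hq : q ∈ Agamma γ) {p : (ℝ → ℝ) × (ℝ → ℝ)} (hp : p ∈ W12)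
    (hpos : ∀ x ∈ Icc (0 : ℝ) 1, 0 < p.1 x) :
    ∫ x in (0 : ℝ)..1, p.1 x ^ 2 ≤ ∫ x in (0 : ℝ)..1, (p.2 x ^ 2 + q x * p.1 x ^ 2) := by
  have hπ := Real.pi_gt_three
  have hP : 0 < π ^ 2 - 2 := by nlinarith
  have hγP : γ ≤ (π ^ 2 - 2) / (π ^ 2 - 2 + 2) :=
    hγ.2.trans_eq (by rw [sub_add_cancel]; field_simp)
  obtain ⟨t, ht, hpot⟩ := exists_pos_integral_potential_le hp hpos
  have hicc : uIcc (0 : ℝ) 1 = Icc 0 1 := uIcc_of_le zero_le_one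
  have hqy := Agamma.intervalIntegrable_mul_sq hq hp
  have hy2 : IntervalIntegrable (fun x => p.1 x ^ 2) volume 0 1 :=
    ContinuousOn.intervalIntegrable (by rw [hicc]; exact (W12.continuousOn hp).pow 2)
  have hIpot : IntervalIntegrable (fun x => potential (π ^ 2 - 2) (t * p.1 x)) volume 0 1 :=
    ContinuousOn.intervalIntegrable
      (by rw [hicc]; exact continuousOn_potential_comp ((W12.continuousOn hp).const_mul t)
            (fun x hx => mul_pos ht (hpos x hx)) _)
  have hqγ : IntervalIntegrable (fun x => q x ^ γ) volume 0 1 := by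
    by_contra h
    have := hq.2.2
    rw [intervalIntegral.integral_undef h] at this
    exact zero_ne_one this
  have hA : IntervalIntegrable (fun x => t ^ 2 * (q x * p.1 x ^ 2) - t ^ 2 * p.1 x ^ 2)
      volume 0 1 := (hqy.const_mul _).sub (hy2.const_mul _)
  have hmono : ∫ x in (0 : ℝ)..1, q x ^ γ ≤ ∫ x in (0 : ℝ)..1, (1 + γ * (t ^ 2 * (q x * p.1 x ^ 2)
      - t ^ 2 * p.1 x ^ 2 + potential (π ^ 2 - 2) (t * p.1 x))) := by
    refine intervalIntegral.integral_mono_ae_restrict zero_le_one hqγ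
      (intervalIntegrable_const.add ((hA.add hIpot).const_mul γ)) ?_
    filter_upwards [hq.2.1, ae_restrict_mem measurableSet_Icc] with x hqx hx
    refine (rpow_le_one_add_mul_potential hP hγ.1 hγP hqx (mul_pos ht (hpos x hx))).trans_eq ?_
    ring
  rw [hq.2.2, intervalIntegral.integral_add intervalIntegrable_const ((hA.add hIpot).const_mul γ),
    intervalIntegral.integral_const_mul, intervalIntegral.integral_add hA hIpot,
    intervalIntegral.integral_sub (hqy.const_mul _) (hy2.const_mul _),
    intervalIntegral.integral_const_mul, intervalIntegral.integral_const_mul,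
    intervalIntegral.integral_const] at hmono
  simp only [sub_zero, one_smul, le_add_iff_nonneg_right] at hmono
  have h1 := nonneg_of_mul_nonneg_right hmono hγ.1
  simp only [mul_pow, intervalIntegral.integral_const_mul] at hpot
  rw [intervalIntegral.integral_add hp.2.2 hqy]
  refine le_of_mul_le_mul_left ?_ (pow_pos ht 2)
  linarith

lemma integral_sq_le {γ : ℝ} (hγ : γ ∈ Ioc (0 : ℝ) (1 - 2 / π ^ 2)) {q : ℝ → ℝ}
    (hq : q ∈ Agamma γ) {p : (ℝ → ℝ) × (ℝ → ℝ)} (hp : p ∈ W12) :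
    ∫ x in (0 : ℝ)..1, p.1 x ^ 2 ≤ ∫ x in (0 : ℝ)..1, (p.2 x ^ 2 + q x * p.1 x ^ 2) := by
  by_cases h0 : ∃ u ∈ Icc (0 : ℝ) 1, p.1 u = 0
  · obtain ⟨u, hu, hu0⟩ := h0
    rw [intervalIntegral.integral_add hp.2.2 (Agamma.intervalIntegrable_mul_sq hq hp)]
    have h1 : 0 ≤ ∫ x in (0 : ℝ)..1, q x * p.1 x ^ 2 := by
      refine intervalIntegral.integral_nonneg_of_ae_restrict zero_le_one ?_
      filter_upwards [hq.2.1] with x hx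
      exact mul_nonneg hx (sq_nonneg _)
    linarith [W12.integral_sq_le_of_eq_zero hp hu hu0]
  · push Not at h0
    have hmem : (0 : ℝ) ∈ Icc (0 : ℝ) 1 := ⟨le_rfl, zero_le_one⟩
    have hpre := isPreconnected_Icc.image _ (W12.continuousOn hp)
    have hsame : ∀ x ∈ Icc (0 : ℝ) 1, ¬ (0 ∈ uIcc (p.1 0) (p.1 x)) := by
      intro x hx h
      obtain ⟨u, hu, hu0⟩ := hpre.ordConnected.uIcc_subset (mem_image_of_mem _ hmem)
        (mem_image_of_mem _ hx) h
      exact h0 u hu hu0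
    rcases (h0 0 hmem).lt_or_gt with hneg | hpos
    · have h := integral_sq_le_of_pos hγ hq (W12.const_mul hp (-1)) fun x hx => by
        by_contra! h
        exact hsame x hx (by rw [uIcc_of_le (by linarith)]; exact ⟨hneg.le, by linarith⟩)
      simpa using h
    · refine integral_sq_le_of_pos hγ hq hp fun x hx => ?_
      by_contra! h
      exact hsame x hx (by rw [uIcc_of_ge (by linarith)]; exact ⟨h, hpos.le⟩)

lemma one_mem_W12 : ((fun _ => 1, fun _ => 0) : (ℝ → ℝ) × (ℝ → ℝ)) ∈ W12 := by
  simp [W12]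

lemma one_mem_Agamma (γ : ℝ) : (fun _ => 1 : ℝ → ℝ) ∈ Agamma γ := by
  simp [Agamma]

lemma one_le_of_mem_rayleigh {γ : ℝ} (hγ : γ ∈ Ioc (0 : ℝ) (1 - 2 / π ^ 2)) {q : ℝ → ℝ}
    (hq : q ∈ Agamma γ) {r : ℝ}
    (hr : ∃ p ∈ W12, 0 < (∫ t in (0 : ℝ)..1, p.1 t ^ 2) ∧ r = Rayleigh q p) : 1 ≤ r := by
  obtain ⟨p, hp, hpos, rfl⟩ := hr
  rw [Rayleigh, one_le_div hpos]
  exact integral_sq_le hγ hq hp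

lemma one_le_lambda1 {γ : ℝ} (hγ : γ ∈ Ioc (0 : ℝ) (1 - 2 / π ^ 2)) {q : ℝ → ℝ}
    (hq : q ∈ Agamma γ) : 1 ≤ lambda1 q :=
  le_csInf ⟨_, _, one_mem_W12, by simp, rfl⟩ fun _ hr => one_le_of_mem_rayleigh hγ hq hr

/-- For every `γ ∈ (0, 1 − 2π⁻²]` one has `m_γ = 1`. -/
theorem mGamma_eq_one (γ : ℝ) (hγ : γ ∈ Ioc (0:ℝ) (1 - 2 / π ^ 2)) :
    mGamma γ = 1 := by
  apply le_antisymm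
  · have h1 : mGamma γ ≤ lambda1 fun _ => 1 := by
      refine csInf_le ⟨1, ?_⟩ ⟨_, one_mem_Agamma γ, rfl⟩
      rintro _ ⟨q, hq, rfl⟩
      exact one_le_lambda1 hγ hq
    refine h1.trans (csInf_le ⟨1, fun r hr => one_le_of_mem_rayleigh hγ (one_mem_Agamma γ) hr⟩
      ⟨_, one_mem_W12, by simp, by simp [Rayleigh]⟩)
  · refine le_csInf ⟨_, _, one_mem_Agamma γ, rfl⟩ ?_
    rintro _ ⟨q, hq, rfl⟩
    exact one_le_lambda1 hγ hq
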